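/- Let p = 3 and q = p^m where m ≥ 6 is an even integer. Set A_2' = p^m − 1 and A_4' = (p^m−1)(2p^m−p−3)/3 + (p^m−1)(p^m−3)/2, and define a = [ p^{3m−2}·((p^m−1)(p^m−2)(p−1)² + 2A_2') − p^{2(m−1)}(p−1)²(p^{3m}−2p^{2m}+1) + (p−1)(p^m−1)p^{3m−1} ] / ((p−1)²·p^{m−2}) and b = [ p^{3m−4}·((p^m−1)(p^m−2)(p^m−3)(p^m−4)(p−1)⁴ + 12A_2'(p^m−3)(p^m−4)(p−1)² + 24A_4') − (p−1)⁵·p^{3(m−1)}·a − p^{4(m−1)}(p−1)⁴(p^{3m}−4p^{2m}−16p^m+19) + 6·((p−1)³·p^{2(m−1)}·a + p^{3(m−1)}(p−1)³(p^{3m}−p^{2m+1}−4p^m+6)) − 11·((p−1)²·p^{m−2}·a + p^{2(m−1)}(p−1)²(p^{3m}−2p^{2m}+1)) + 6·(p−1)(p^m−1)p^{3m−1} ] / ((p−1)⁴·p^{2m−4}). Then n_{1,0} + n_{−1,0} + p²(n_{1,2}+n_{−1,2}) + p⁴(n_{1,4}+n_{−1,4}) = a and n_{1,0} + n_{−1,0}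 + p⁴(n_{1,2}+n_{−1,2}) + p⁸(n_{1,4}+n_{−1,4}) = b. -/

import Mathlib

open Complex Finset

noncomputable def zetaPow (p : ℕ) (a : ZMod p) : ℂ :=
  Complex.exp (2 * Real.pi * Complex.I * (a.val : ℂ) / (p : ℂ))

noncomputable def expSum (p m : ℕ) [Fact p.Prime]
    (α β γ : GaloisField p m) : ℂ :=
  letI : Fintype (GaloisField p m) := Fintype.ofFinite _
  ∑ x : GaloisField p m,
    zetaPow p ((Algebra.trace (ZMod p) (GaloisField p m))
      (α * x ^ 2 + β * x ^ (p + 1) + γ * x ^ (p ^ 2 + 1)))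

noncomputable def nval (p m : ℕ) (ε : ℤ) (j : ℕ) : ℂ :=
  if j % 2 = 0 then (ε : ℂ) * ((Real.sqrt ((p : ℝ) ^ (m + j)) : ℝ) : ℂ)
  else (ε : ℂ) * Complex.I * ((Real.sqrt ((p : ℝ) ^ (m + j)) : ℝ) : ℂ)

noncomputable def nn (p m : ℕ) [Fact p.Prime] (ε : ℤ) (j : ℕ) : ℕ :=
  {t : GaloisField p m × GaloisField p m × GaloisField p m |
    t ≠ (0, 0, 0) ∧ expSum p m t.1 t.2.1 t.2.2 = nval p m ε j}.ncard

/-!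
For `t = (α, β, γ)`, `S(t)` is the sum of `ζ ^ Q(x)` for a quadratic form `Q` over `𝔽_p` on `𝔽_q`.
Diagonalizing `Q` and evaluating quadratic Gauss sums shows that `S(t) ^ 2` depends only on the
dimension `d` of the radical of `Q`: for `p ≡ 3 mod 4` and even `m` it equals
`(-1) ^ d p ^ (m + d)`.
If `t ≠ 0` the radical consists of roots of a nonzero polynomial of degree at most `p ^ 4`, so
`d ≤ 4`. Hence `S ^ 2 + |S| ^ 2` is `2 p ^ (m + d)` for `d = 0, 2, 4` and vanishes for odd `d`, and
the sums over `t` of `S ^ 2 + |S| ^ 2` and `(S ^ 2 + |S| ^ 2) |S| ^ 2` give the two weighted counts.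
By orthogonality of characters these sums count the solutions of `v x + v y = 0`, `v x = v y`,
`v x + v y + v z = v w` and `v x + v y = v z + v w` on the curve
`v x = (x ^ 2, x ^ (p + 1), x ^ (p ^ 2 + 1))`. For `p = 3` these systems are solved by hand through
the elementary symmetric functions of the squares.
-/

section QuadraticGaussSum

variable {K R : Type*} [Field K] [Fintype K] [CommRing R] {ψ : AddChar K R}

lemma sum_addChar_weightedSumSquares {ι : Type*} [Fintype ι] [DecidableEq ι] (w : ι → K) :
    ∑ v, ψ (QuadraticMap.weightedSumSquares K w v) = ∏ i, ∑ x, ψ (w i * x ^ 2) := by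
  have map_sum (f : ι → K) : ψ (∑ i, f i) = ∏ i, ψ (f i) :=
    map_prod ψ.toMonoidHom (fun i => Multiplicative.ofAdd (f i)) univ
  simp only [Finset.prod_univ_sum, Fintype.piFinset_univ, QuadraticMap.weightedSumSquares_apply,
    map_sum, smul_eq_mul, sq]

variable [IsDomain R]

lemma sum_addChar_sq_eq_gaussSum [DecidableEq K] (hK : ringChar K ≠ 2) (hψ : ψ ≠ 1) :
    ∑ x, ψ (x ^ 2) = gaussSum ((quadraticChar K).ringHomComp (Int.castRingHom R)) ψ := by
  have card_sqrts (a : K) : (#{x | x ^ 2 = a} : R) = quadraticChar K a + 1 := by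
    have := quadraticChar_card_sqrts hK a
    rw [Set.toFinset_ofPred] at this
    exact_mod_cast congrArg (Int.cast : ℤ → R) this
  calc ∑ x, ψ (x ^ 2)
      = ∑ a, #{x | x ^ 2 = a} * ψ a := by
        rw [← sum_fiberwise univ (· ^ 2)]
        refine sum_congr rfl fun a _ => ?_
        rw [sum_congr rfl fun x hx => by rw [(mem_filter.1 hx).2], sum_const, nsmul_eq_mul]
    _ = ∑ a, (quadraticChar K a * ψ a + ψ a) := by simp only [card_sqrts, add_one_mul]
    _ = gaussSum ((quadraticChar K).ringHomComp (Int.castRingHom R)) ψ := by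
        rw [sum_add_distrib, AddChar.sum_eq_zero_of_ne_one hψ, add_zero]
        rfl

lemma sum_addChar_mul_sq_sq [CharZero R] [DecidableEq K] (hK : ringChar K ≠ 2)
    (hψ : ψ.IsPrimitive) {a : K} (ha : a ≠ 0) :
    (∑ x, ψ (a * x ^ 2)) ^ 2 = quadraticChar K (-1) * Fintype.card K := by
  have hχ : (quadraticChar K).ringHomComp (Int.castRingHom R) ≠ 1 :=
    (MulChar.ringHomComp_ne_one_iff Int.cast_injective).2 (quadraticChar_ne_one hK)
  have hmulShift := sum_addChar_sq_eq_gaussSum hK (hψ ha)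
  simp only [AddChar.mulShift_apply] at hmulShift
  rw [hmulShift, gaussSum_sq hχ ((quadraticChar_isQuadratic K).comp _) (.of_ne_one (hψ ha))]
  rfl

theorem sum_addChar_quadraticForm_sq [CharZero R] [DecidableEq K] (hK : ringChar K ≠ 2)
    (hψ : ψ.IsPrimitive) {V : Type*} [AddCommGroup V] [Module K V] [Fintype V]
    (Q : QuadraticForm K V) :
    (∑ v, ψ (Q v)) ^ 2 = quadraticChar K (-1) ^ Module.finrank K (V ⧸ Q.radical)
      * Fintype.card K ^ (Module.finrank K V + Module.finrank K Q.radical) := by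
  have : Invertible (2 : K) := invertibleOfNonzero (Ring.two_ne_zero hK)
  obtain ⟨w, ⟨e⟩⟩ := QuadraticForm.equivalent_weightedSumSquares Q
  have hradical : Module.finrank K Q.radical = #{i | w i = 0} := by
    rw [QuadraticForm.finrank_radical_of_equiv_weightedSumSquares ⟨e⟩, ← Set.ncard_coe_finset,
      coe_filter_univ]
  have hdim : #{i | w i = 0} + #{i | ¬ w i = 0} = Module.finrank K V := by
    rw [card_filter_add_card_filter_not, card_univ, Fintype.card_fin]
  have hrank : Module.finrank K (V ⧸ Q.radical) = #{i | ¬ w i = 0} := by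
    have := Q.radical.finrank_quotient_add_finrank
    omega
  have hfactor (i) : (∑ x, ψ (w i * x ^ 2)) ^ 2
      = if w i = 0 then (Fintype.card K : R) ^ 2 else quadraticChar K (-1) * Fintype.card K := by
    split_ifs with hi
    · simp [hi]
    · exact sum_addChar_mul_sq_sq hK hψ hi
  calc (∑ v, ψ (Q v)) ^ 2
      = ∏ i, (∑ x, ψ (w i * x ^ 2)) ^ 2 := by
        rw [prod_pow, ← sum_addChar_weightedSumSquares, ← Equiv.sum_comp e.toEquiv]
        exact congrArg (· ^ 2) (sum_congr rfl fun v _ => by rw [← e.map_app]; rfl)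
    _ = ((Fintype.card K : R) ^ 2) ^ #{i | w i = 0}
          * (quadraticChar K (-1) * Fintype.card K) ^ #{i | ¬ w i = 0} := by
        simp only [hfactor, prod_ite, prod_const]
    _ = _ := by
        have hexp : Module.finrank K V + Module.finrank K Q.radical
            = 2 * #{i | w i = 0} + #{i | ¬ w i = 0} := by omega
        rw [hrank, hexp]
        ring

end QuadraticGaussSum

section RadicalPolynomial

variable {F : Type*} [CommRing F] {q : ℕ}

open Polynomial in
/-- The linearized polynomial
`γ ^ (q ^ 2) X ^ (q ^ 4) + β ^ (q ^ 2) X ^ (q ^ 3) + 2 α ^ (q ^ 2) X ^ (q ^ 2) + β ^ q X ^ q + γ X`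
for `t = (α, β, γ)`, which vanishes on the radical of `traceQuadraticForm K t` when `q = #K`. -/
noncomputable def radicalPolynomial (q : ℕ) (t : F × F × F) : F[X] :=
  ∑ i : Fin 5, C (![t.2.2, t.2.1 ^ q, 2 * t.1 ^ q ^ 2, t.2.1 ^ q ^ 2, t.2.2 ^ q ^ 2] i)
    * X ^ q ^ (i : ℕ)

lemma eval_radicalPolynomial (t : F × F × F) (x : F) :
    (radicalPolynomial q t).eval x = t.2.2 * x + t.2.1 ^ q * x ^ q + 2 * t.1 ^ q ^ 2 * x ^ q ^ 2
      + t.2.1 ^ q ^ 2 * x ^ q ^ 3 + t.2.2 ^ q ^ 2 * x ^ q ^ 4 := by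
  simp [radicalPolynomial, Fin.sum_univ_five, Polynomial.eval_add]

lemma natDegree_radicalPolynomial_le (hq : 0 < q) (t : F × F × F) :
    (radicalPolynomial q t).natDegree ≤ q ^ 4 :=
  Polynomial.natDegree_sum_le_of_forall_le _ _ fun i _ =>
    (Polynomial.natDegree_C_mul_X_pow_le _ _).trans
      (Nat.pow_le_pow_right hq (Nat.le_of_lt_succ i.2))

lemma coeff_radicalPolynomial (hq : 1 < q) (t : F × F × F) (i : Fin 5) :
    (radicalPolynomial q t).coeff (q ^ (i : ℕ))
      = ![t.2.2, t.2.1 ^ q, 2 * t.1 ^ q ^ 2, t.2.1 ^ q ^ 2, t.2.2 ^ q ^ 2] i := by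
  have hinj (j : Fin 5) : q ^ (i : ℕ) = q ^ (j : ℕ) ↔ i = j := by
    rw [Nat.pow_right_inj hq, Fin.val_inj]
  simp only [radicalPolynomial, Polynomial.finsetSum_coeff, Polynomial.coeff_C_mul,
    Polynomial.coeff_X_pow, hinj, mul_ite, mul_one, mul_zero, sum_ite_eq, mem_univ, if_true]

lemma radicalPolynomial_ne_zero [IsDomain F] (h2 : (2 : F) ≠ 0) (hq : 1 < q) {t : F × F × F}
    (ht : t ≠ 0) : radicalPolynomial q t ≠ 0 := by
  intro h
  have hcoeff (i) := (coeff_radicalPolynomial hq t i).symm.trans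
    (by rw [h, Polynomial.coeff_zero])
  have hα : 2 * t.1 ^ q ^ 2 = 0 := hcoeff 2
  have hβ : t.2.1 ^ q = 0 := hcoeff 1
  have hγ : t.2.2 = 0 := hcoeff 0
  exact ht (Prod.ext (eq_zero_of_pow_eq_zero ((mul_eq_zero.1 hα).resolve_left h2))
    (Prod.ext (eq_zero_of_pow_eq_zero hβ) hγ))

end RadicalPolynomial

section TraceQuadraticForm

variable {K F : Type*} [Field K] [Fintype K] [Field F] [Algebra K F]

local notation "q" => Fintype.card K

lemma trace_pow_card [Algebra.IsAlgebraic K F] (x : F) :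
    Algebra.trace K F (x ^ q) = Algebra.trace K F x :=
  Algebra.trace_eq_of_algEquiv (FiniteField.frobeniusAlgEquivOfAlgebraic K F) x

variable (K) in
/-- The `K`-linear endomorphism `x ↦ α x + β x ^ q + γ x ^ (q ^ 2)` of `F`, where `t = (α, β, γ)`
and `q` is the number of elements of `K`. -/
noncomputable def linearizedTrinomial (t : F × F × F) : F →ₗ[K] F :=
  LinearMap.mulLeft K t.1
    + LinearMap.mulLeft K t.2.1 ∘ₗ (FiniteField.frobeniusAlgHom K F).toLinearMap
    + LinearMap.mulLeft K t.2.2 ∘ₗ (FiniteField.frobeniusAlgHom K F ^ 2).toLinearMap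

lemma linearizedTrinomial_apply (t : F × F × F) (x : F) :
    linearizedTrinomial K t x = t.1 * x + t.2.1 * x ^ q + t.2.2 * x ^ q ^ 2 := by
  simp [linearizedTrinomial, FiniteField.coe_frobeniusAlgHom, pow_two, pow_mul]

variable (K) in
/-- The quadratic form `x ↦ Tr (α x ^ 2 + β x ^ (q + 1) + γ x ^ (q ^ 2 + 1))` over `K` on `F`, where
`t = (α, β, γ)` and `q` is the number of elements of `K`. -/
noncomputable def traceQuadraticForm (t : F × F × F) : QuadraticForm K F :=
  LinearMap.BilinMap.toQuadraticMap (Algebra.traceForm K F ∘ₗ linearizedTrinomial K t)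

lemma traceQuadraticForm_apply (t : F × F × F) (x : F) :
    traceQuadraticForm K t x
      = Algebra.trace K F (t.1 * x ^ 2 + t.2.1 * x ^ (q + 1) + t.2.2 * x ^ (q ^ 2 + 1)) := by
  simp only [traceQuadraticForm, LinearMap.BilinMap.toQuadraticMap_apply, LinearMap.comp_apply,
    linearizedTrinomial_apply, Algebra.traceForm_apply]
  ring_nf

variable [Finite F]

lemma trace_pow_card_sq (x : F) : Algebra.trace K F (x ^ q ^ 2) = Algebra.trace K F x := by
  rw [pow_two, pow_mul, trace_pow_card, trace_pow_card]

lemma isRoot_radicalPolynomial {t : F × F × F} {x : F}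
    (hx : x ∈ (traceQuadraticForm K t).radical) : (radicalPolynomial q t).IsRoot x := by
  have hpolar (y : F) : Algebra.trace K F (linearizedTrinomial K t x * y)
      + Algebra.trace K F (linearizedTrinomial K t y * x) = 0 := by
    have := DFunLike.congr_fun hx.2 y
    rwa [QuadraticMap.polarBilin_apply_apply, traceQuadraticForm,
      LinearMap.BilinMap.polar_toQuadraticMap] at this
  have htrace (y : F) :
      Algebra.trace K F ((radicalPolynomial q t).eval x * y ^ q ^ 2) = 0 := by
    calc Algebra.trace K F ((radicalPolynomial q t).eval x * y ^ q ^ 2)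
        = Algebra.trace K F ((t.1 * x * y) ^ q ^ 2)
          + Algebra.trace K F ((t.2.1 * x ^ q * y) ^ q ^ 2)
          + Algebra.trace K F ((t.2.2 * x ^ q ^ 2 * y) ^ q ^ 2)
          + (Algebra.trace K F ((t.1 * y * x) ^ q ^ 2) + Algebra.trace K F ((t.2.1 * y ^ q * x) ^ q)
            + Algebra.trace K F (t.2.2 * y ^ q ^ 2 * x)) := by
          rw [← map_add, ← map_add, ← map_add, ← map_add, ← map_add, eval_radicalPolynomial]
          ring_nf
      _ = 0 := by
          simpa only [trace_pow_card_sq, trace_pow_card, ← map_add, ← add_mul,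
            linearizedTrinomial_apply] using hpolar y
  have hsurj : Function.Surjective fun y : F => y ^ q ^ 2 := by
    convert (FiniteField.frobeniusAlgEquivOfAlgebraic K F ^ 2).surjective using 1
    ext y
    simp [pow_two, pow_mul]
  refine (traceForm_nondegenerate K F).1 _ fun z => ?_
  obtain ⟨y, rfl⟩ := hsurj z
  exact htrace y

theorem finrank_radical_traceQuadraticForm_le (hK : ringChar K ≠ 2) {t : F × F × F} (ht : t ≠ 0) :
    Module.finrank K (traceQuadraticForm K t).radical ≤ 4 := by
  refine (Nat.pow_le_pow_iff_right (Fintype.one_lt_card (α := K))).1 ?_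
  have h2 : (2 : F) ≠ 0 := by
    rw [← map_ofNat (algebraMap K F) 2]
    exact (map_ne_zero _).2 (Ring.two_ne_zero hK)
  calc q ^ Module.finrank K (traceQuadraticForm K t).radical
      = ((traceQuadraticForm K t).radical : Set F).ncard := by
        rw [← Nat.card_eq_fintype_card, ← Module.natCard_eq_pow_finrank (K := K)]
        rfl
    _ ≤ ((radicalPolynomial q t).rootSet F).ncard :=
        Set.ncard_le_ncard fun x hx => Polynomial.mem_rootSet.2
          ⟨radicalPolynomial_ne_zero h2 Fintype.one_lt_card ht, isRoot_radicalPolynomial hx⟩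
    _ ≤ q ^ 4 :=
        (Polynomial.ncard_rootSet_le _ F).trans (natDegree_radicalPolynomial_le Fintype.card_pos t)

end TraceQuadraticForm

section PointExpSum

variable {F ι κ : Type*} [CommRing F] [Fintype ι] [Fintype κ] {ψ : AddChar F ℂ}

/-- The exponential sum `∑ i, ψ ⟨t, v i⟩` at `t` over a finite family `v` of points of `F ^ 3`,
where `⟨·, ·⟩` is the standard bilinear pairing. -/
noncomputable def pointExpSum (ψ : AddChar F ℂ) (v : ι → F × F × F) (t : F × F × F) : ℂ :=
  ∑ i, ψ (t.1 * (v i).1 + t.2.1 * (v i).2.1 + t.2.2 * (v i).2.2)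

lemma pointExpSum_mul (v : ι → F × F × F) (w : κ → F × F × F) (t : F × F × F) :
    pointExpSum ψ v t * pointExpSum ψ w t
      = pointExpSum ψ (fun i : ι × κ => v i.1 + w i.2) t := by
  simp only [pointExpSum, sum_mul_sum, Fintype.sum_prod_type, ← AddChar.map_add_eq_mul,
    Prod.fst_add, Prod.snd_add]
  ring_nf

lemma pointExpSum_zero (v : ι → F × F × F) : pointExpSum ψ v 0 = Fintype.card ι := by
  simp [pointExpSum]

lemma conj_pointExpSum [Finite F] (v : ι → F × F × F) (t : F × F × F) :
    starRingEnd ℂ (pointExpSum ψ v t) = pointExpSum ψ (-v) t := by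
  simp only [pointExpSum, map_sum, ← AddChar.map_neg_eq_conj, Pi.neg_apply, Prod.fst_neg,
    Prod.snd_neg, mul_neg, neg_add]

lemma sum_pointExpSum [Fintype F] [DecidableEq F] (hψ : ψ.IsPrimitive) (v : ι → F × F × F) :
    ∑ t, pointExpSum ψ v t = Fintype.card F ^ 3 * #{i | v i = 0} := by
  have hpoint (u : F × F × F) : ∑ t : F × F × F, ψ (t.1 * u.1 + t.2.1 * u.2.1 + t.2.2 * u.2.2)
      = if u = 0 then (Fintype.card F : ℂ) ^ 3 else 0 := by
    simp only [Fintype.sum_prod_type, AddChar.map_add_eq_mul, ← mul_sum, ← sum_mul,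
      AddChar.sum_mulShift _ hψ, Nat.cast_ite, Nat.cast_zero, Prod.ext_iff,
      Prod.fst_zero, Prod.snd_zero]
    grind
  simp only [pointExpSum]
  rw [sum_comm]
  simp only [hpoint, sum_ite, sum_const_zero, add_zero, sum_const, nsmul_eq_mul, mul_comm]

lemma sum_pointExpSum_mul_conj [Fintype F] [DecidableEq F] (hψ : ψ.IsPrimitive)
    (v : ι → F × F × F) (w : κ → F × F × F) :
    ∑ t, pointExpSum ψ v t * starRingEnd ℂ (pointExpSum ψ w t)
      = Fintype.card F ^ 3 * #{i : ι × κ | v i.1 = w i.2} := by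
  simp only [conj_pointExpSum, pointExpSum_mul, sum_pointExpSum hψ, Pi.neg_apply,
    ← sub_eq_add_neg, sub_eq_zero]

end PointExpSum

section MonomialCurve

/-- The parametrized curve `x ↦ (x ^ 2, x ^ (p + 1), x ^ (p ^ 2 + 1))`, whose pairing with
`(α, β, γ)` is the argument of the trace in `expSum`. -/
def monomialCurve {F : Type*} [Monoid F] (p : ℕ) (x : F) : F × F × F :=
  (x ^ 2, x ^ (p + 1), x ^ (p ^ 2 + 1))

lemma monomialCurve_eq_iff {M : Type*} [Monoid M] {p : ℕ} (hp : Odd p) {x y : M} :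
    monomialCurve p x = monomialCurve p y ↔ x ^ 2 = y ^ 2 := by
  refine ⟨fun h => congrArg Prod.fst h, fun h => ?_⟩
  obtain ⟨k, hk⟩ : Even (p + 1) := hp.add_one
  obtain ⟨l, hl⟩ : Even (p ^ 2 + 1) := hp.pow.add_one
  simp only [monomialCurve, hk, hl, ← two_mul, pow_mul, h]

variable {F : Type*} [CommRing F] [IsDomain F] {p : ℕ}

lemma monomialCurve_add_eq_zero_iff (h2 : (2 : F) ≠ 0) (hp : p % 4 = 3) {x y : F} :
    monomialCurve p x + monomialCurve p y = 0 ↔ x = 0 ∧ y = 0 := by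
  constructor
  · intro h
    have hsq : x ^ 2 = -y ^ 2 := eq_neg_of_add_eq_zero_left (congrArg Prod.fst h)
    have hpow : x ^ (p + 1) = y ^ (p + 1) := by
      obtain ⟨k, hk⟩ : Even ((p + 1) / 2) := ⟨(p + 1) / 4, by omega⟩
      have hexp : p + 1 = 2 * (k + k) := by omega
      rw [hexp, pow_mul, pow_mul, hsq, ← two_mul, pow_mul, pow_mul, neg_sq]
    have hy : y = 0 := by
      have : 2 * y ^ (p + 1) = 0 := by
        rw [two_mul]
        nth_rw 1 [← hpow]
        exact congrArg (·.2.1) h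
      exact eq_zero_of_pow_eq_zero ((mul_eq_zero.1 this).resolve_left h2)
    exact ⟨eq_zero_of_pow_eq_zero (n := 2) (by rw [hsq, hy, zero_pow two_ne_zero, neg_zero]), hy⟩
  · rintro ⟨rfl, rfl⟩
    simp [monomialCurve]

lemma monomialCurve_three_add_eq_add_iff (h2 : (2 : F) ≠ 0) {x y z w : F} :
    monomialCurve 3 x + monomialCurve 3 y = monomialCurve 3 z + monomialCurve 3 w
      ↔ x ^ 2 = z ^ 2 ∧ y ^ 2 = w ^ 2 ∨ x ^ 2 = w ^ 2 ∧ y ^ 2 = z ^ 2 := by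
  constructor
  · intro h
    have hsq : x ^ 2 + y ^ 2 = z ^ 2 + w ^ 2 := congrArg Prod.fst h
    have hfourth : x ^ 4 + y ^ 4 = z ^ 4 + w ^ 4 := congrArg (·.2.1) h
    have hprod : 2 * ((x ^ 2 - z ^ 2) * (x ^ 2 - w ^ 2)) = 0 := by
      linear_combination hfourth + (x ^ 2 - y ^ 2 - z ^ 2 - w ^ 2) * hsq
    refine (mul_eq_zero.1 ((mul_eq_zero.1 hprod).resolve_left h2)).imp (fun hxz => ?_) fun hxw => ?_
    · exact ⟨sub_eq_zero.1 hxz, by linear_combination hsq - hxz⟩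
    · exact ⟨sub_eq_zero.1 hxw, by linear_combination hsq - hxw⟩
  · rintro (⟨hxz, hyw⟩ | ⟨hxw, hyz⟩)
    · rw [(monomialCurve_eq_iff (by decide)).2 hxz, (monomialCurve_eq_iff (by decide)).2 hyw]
    · rw [(monomialCurve_eq_iff (by decide)).2 hxw, (monomialCurve_eq_iff (by decide)).2 hyz,
        add_comm]

lemma two_ne_zero_of_charP_three [CharP F 3] : (2 : F) ≠ 0 := by
  have h3 : (3 : F) = 0 := CharP.cast_eq_zero F 3
  exact fun h2 => one_ne_zero (by linear_combination h3 - h2 : (1 : F) = 0)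

lemma eq_or_eq_zero_of_power_sums_eq [CharP F 3] {a b c : F}
    (hsq : a ^ 2 + b ^ 2 + c ^ 2 = (a + b + c) ^ 2)
    (hfifth : a ^ 5 + b ^ 5 + c ^ 5 = (a + b + c) ^ 5) :
    (a = b ∧ a = c) ∨ (a = 0 ∧ b = 0) ∨ (a = 0 ∧ c = 0) ∨ (b = 0 ∧ c = 0) := by
  have h2 : (2 : F) ≠ 0 := two_ne_zero_of_charP_three
  have h3 : (3 : F) = 0 := CharP.cast_eq_zero F 3
  have he₂ : a * b + b * c + c * a = 0 :=
    (mul_eq_zero.1 (by linear_combination -hsq : 2 * (a * b + b * c + c * a) = 0)).resolve_left h2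
  have he₁e₃ : (a + b + c) ^ 2 * (a * b * c) = 0 := by
    refine (mul_eq_zero.1 (?_ : 2 * ((a + b + c) ^ 2 * (a * b * c)) = 0)).resolve_left h2
    linear_combination hfifth - (a + b + c) ^ 2 * (a * b * c) * h3
      - 5 * (-(a + b + c) ^ 3 + (a + b + c) * (a * b + b * c + c * a) - a * b * c) * he₂
  rcases mul_eq_zero.1 he₁e₃ with he₁ | he₃
  · have he₁ : a + b + c = 0 := eq_zero_of_pow_eq_zero he₁
    have hab : a - b = 0 := by
      refine eq_zero_of_pow_eq_zero (n := 2) ?_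
      linear_combination (a + b) * he₁ - he₂ - a * b * h3
    exact .inl ⟨sub_eq_zero.1 hab, by linear_combination -he₁ - hab + a * h3⟩
  · rcases mul_eq_zero.1 he₃ with hab | rfl
    · rcases mul_eq_zero.1 hab with rfl | rfl
      · have hbc : b = 0 ∨ c = 0 := by simpa using he₂
        tauto
      · have hca : c = 0 ∨ a = 0 := by simpa using he₂
        tauto
    · have hab : a = 0 ∨ b = 0 := by simpa using he₂
      tauto

lemma monomialCurve_three_add_add_eq_iff [CharP F 3] {x y z w : F} :
    monomialCurve 3 x + monomialCurve 3 y + monomialCurve 3 z = monomialCurve 3 w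
      ↔ (x ^ 2 = y ^ 2 ∧ x ^ 2 = z ^ 2 ∧ w = 0) ∨ (x = 0 ∧ y = 0 ∧ z ^ 2 = w ^ 2)
        ∨ (x = 0 ∧ z = 0 ∧ y ^ 2 = w ^ 2) ∨ (y = 0 ∧ z = 0 ∧ x ^ 2 = w ^ 2) := by
  have h3 : (3 : F) = 0 := CharP.cast_eq_zero F 3
  have eq_zero {u : F} (hu : u ^ 2 = 0) : u = 0 := eq_zero_of_pow_eq_zero hu
  constructor
  · intro h
    have hw : x ^ 2 + y ^ 2 + z ^ 2 = w ^ 2 := congrArg Prod.fst h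
    have hfourth : x ^ 4 + y ^ 4 + z ^ 4 = w ^ 4 := congrArg (·.2.1) h
    have htenth : x ^ 10 + y ^ 10 + z ^ 10 = w ^ 10 := congrArg (·.2.2) h
    rcases eq_or_eq_zero_of_power_sums_eq (a := x ^ 2) (b := y ^ 2) (c := z ^ 2)
      (by rw [hw]; linear_combination hfourth) (by rw [hw]; linear_combination htenth) with
      ⟨hxy, hxz⟩ | ⟨hx, hy⟩ | ⟨hx, hz⟩ | ⟨hy, hz⟩
    · exact .inl ⟨hxy, hxz, eq_zero (by linear_combination x ^ 2 * h3 - hw - hxy - hxz)⟩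
    · exact .inr (.inl ⟨eq_zero hx, eq_zero hy, by linear_combination hw - hx - hy⟩)
    · exact .inr (.inr (.inl ⟨eq_zero hx, eq_zero hz, by linear_combination hw - hx - hz⟩))
    · exact .inr (.inr (.inr ⟨eq_zero hy, eq_zero hz, by linear_combination hw - hy - hz⟩))
  · have hcurve {u v : F} (huv : u ^ 2 = v ^ 2) : monomialCurve 3 u = monomialCurve 3 v :=
      (monomialCurve_eq_iff (by decide)).2 huv
    have hzero : monomialCurve 3 (0 : F) = 0 := by simp [monomialCurve]
    have htriple (v : F × F × F) : v + v + v = 0 := by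
      calc v + v + v = (3 : F) • v := by module
        _ = 0 := by rw [h3, zero_smul]
    rintro (⟨hxy, hxz, rfl⟩ | ⟨rfl, rfl, h⟩ | ⟨rfl, rfl, h⟩ | ⟨rfl, rfl, h⟩)
    · rw [← hcurve hxy, ← hcurve hxz, htriple, hzero]
    all_goals simp only [hzero, hcurve h, zero_add, add_zero]

variable [DecidableEq F]

/-- The integer-valued indicator of `x ^ 2 = y ^ 2`. -/
def sqEqInd (x y : F) : ℤ := if x ^ 2 = y ^ 2 then 1 else 0

variable [Fintype F]

lemma sum_sqEqInd (h2 : (2 : F) ≠ 0) (x : F) : ∑ y, sqEqInd x y = 2 - if x = 0 then 1 else 0 := by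
  have hroots : ({y | x ^ 2 = y ^ 2} : Finset F) = {x, -x} := by
    ext y
    simp [eq_comm (a := x ^ 2), sq_eq_sq_iff_eq_or_eq_neg]
  have hneg : x = -x ↔ x = 0 := by
    rw [eq_neg_iff_add_eq_zero, ← two_mul, mul_eq_zero, or_iff_right h2]
  simp only [sqEqInd, sum_boole, hroots]
  split_ifs with hx
  · simp [hx]
  · rw [card_pair (mt hneg.1 hx)]
    rfl

lemma sum_sum_sqEqInd_pow (h2 : (2 : F) ≠ 0) (k : ℕ) :
    ∑ x : F, (∑ y, sqEqInd x y) ^ k = 2 ^ k * (Fintype.card F - 1) + 1 := by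
  simp only [sum_sqEqInd h2]
  rw [← add_sum_erase _ _ (mem_univ 0)]
  rw [sum_congr rfl fun x hx => by rw [if_neg (ne_of_mem_erase hx)]]
  simp only [if_true, sub_zero, sum_const, card_erase_of_mem (mem_univ (0 : F)), card_univ,
    nsmul_eq_mul, Nat.cast_pred Fintype.card_pos]
  ring

lemma sum_sum_sqEqInd (h2 : (2 : F) ≠ 0) :
    ∑ x : F, ∑ y, sqEqInd x y = 2 * Fintype.card F - 1 := by
  have hpow := sum_sum_sqEqInd_pow (F := F) h2 1
  simp only [pow_one] at hpow
  linear_combination hpow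

lemma card_monomialCurve_add_eq_zero (h2 : (2 : F) ≠ 0) (hp : p % 4 = 3) :
    #{i : F × F | monomialCurve p i.1 + monomialCurve p i.2 = 0} = 1 := by
  refine card_eq_one.2 ⟨0, ?_⟩
  ext i
  simp [monomialCurve_add_eq_zero_iff h2 hp, Prod.ext_iff]

lemma card_monomialCurve_eq (h2 : (2 : F) ≠ 0) (hp : Odd p) :
    (#{i : F × F | monomialCurve p i.1 = monomialCurve p i.2} : ℤ)
      = 2 * Fintype.card F - 1 := by
  simp only [natCast_card_filter, Fintype.sum_prod_type, monomialCurve_eq_iff hp,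
    ← sum_sum_sqEqInd h2, sqEqInd]

lemma card_monomialCurve_three_add_eq_add (h2 : (2 : F) ≠ 0) :
    (#{i : (F × F) × F × F | monomialCurve 3 i.1.1 + monomialCurve 3 i.1.2
        = monomialCurve 3 i.2.1 + monomialCurve 3 i.2.2} : ℤ)
      = 8 * Fintype.card F ^ 2 - 16 * Fintype.card F + 9 := by
  have hind (x y z w : F) : (if monomialCurve 3 x + monomialCurve 3 y
        = monomialCurve 3 z + monomialCurve 3 w then (1 : ℤ) else 0)
      = sqEqInd x z * sqEqInd y w + sqEqInd x w * sqEqInd y z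
        - sqEqInd x y * sqEqInd x z * sqEqInd x w := by
    simp only [monomialCurve_three_add_eq_add_iff h2, sqEqInd]
    generalize x ^ 2 = a, y ^ 2 = b, z ^ 2 = c, w ^ 2 = d
    by_cases hab : a = b <;> by_cases hac : a = c <;> by_cases had : a = d <;>
      by_cases hbc : b = c <;> by_cases hbd : b = d <;> simp_all
  calc (#{i : (F × F) × F × F | monomialCurve 3 i.1.1 + monomialCurve 3 i.1.2
        = monomialCurve 3 i.2.1 + monomialCurve 3 i.2.2} : ℤ)
      = 2 * (∑ x : F, ∑ y, sqEqInd x y) ^ 2 - ∑ x : F, (∑ y, sqEqInd x y) ^ 3 := by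
        simp only [natCast_card_filter, Fintype.sum_prod_type, hind, sum_add_distrib,
          sum_sub_distrib, ← mul_sum, ← sum_mul]
        ring_nf
    _ = 8 * Fintype.card F ^ 2 - 16 * Fintype.card F + 9 := by
        rw [sum_sum_sqEqInd h2, sum_sum_sqEqInd_pow h2]
        ring

lemma card_monomialCurve_three_add_add_eq [CharP F 3] :
    (#{i : ((F × F) × F) × F | monomialCurve 3 i.1.1.1 + monomialCurve 3 i.1.1.2
        + monomialCurve 3 i.1.2 = monomialCurve 3 i.2} : ℤ)
      = 10 * Fintype.card F - 9 := by
  let δ (x : F) : ℤ := if x = 0 then 1 else 0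
  have hind (x y z w : F) : (if monomialCurve 3 x + monomialCurve 3 y + monomialCurve 3 z
        = monomialCurve 3 w then (1 : ℤ) else 0)
      = sqEqInd x y * sqEqInd x z * δ w + δ x * δ y * sqEqInd z w + δ x * δ z * sqEqInd y w
        + δ y * δ z * sqEqInd x w - 3 * (δ x * δ y * δ z * δ w) := by
    simp only [monomialCurve_three_add_add_eq_iff, δ, sqEqInd]
    by_cases hx : x = 0 <;> by_cases hy : y = 0 <;> by_cases hz : z = 0 <;> by_cases hw : w = 0 <;>
      simp [hx, hy, hz, hw, eq_comm (a := (0 : F)), ← ite_and, and_comm]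
  have h2 : (2 : F) ≠ 0 := two_ne_zero_of_charP_three
  have hδ : ∑ x, δ x = 1 := by simp [δ]
  calc (#{i : ((F × F) × F) × F | monomialCurve 3 i.1.1.1 + monomialCurve 3 i.1.1.2
        + monomialCurve 3 i.1.2 = monomialCurve 3 i.2} : ℤ)
      = ∑ x : F, (∑ y, sqEqInd x y) ^ 2 + 3 * ∑ x : F, ∑ y, sqEqInd x y - 3 := by
        simp only [natCast_card_filter, Fintype.sum_prod_type, hind, sum_add_distrib,
          sum_sub_distrib, ← mul_sum, ← sum_mul, hδ, one_mul, mul_one]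
        ring_nf
    _ = 10 * Fintype.card F - 9 := by
        rw [sum_sum_sqEqInd h2, sum_sum_sqEqInd_pow h2]
        ring

end MonomialCurve

section Moments

/-- The exponential sum `∑ x, ψ (α x ^ 2 + β x ^ (p + 1) + γ x ^ (p ^ 2 + 1))` at `t = (α, β, γ)`,
which is `expSum` for an arbitrary additive character `ψ`. -/
noncomputable def curveSum {F : Type*} [CommRing F] [Fintype F] (ψ : AddChar F ℂ) (p : ℕ)
    (t : F × F × F) : ℂ :=
  pointExpSum ψ (monomialCurve p) t

variable {F : Type*} [CommRing F] [IsDomain F] [Fintype F] {ψ : AddChar F ℂ} {p : ℕ}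

lemma sum_curveSum_sq (hψ : ψ.IsPrimitive) (h2 : (2 : F) ≠ 0) (hp : p % 4 = 3) :
    ∑ t, curveSum ψ p t ^ 2 = (Fintype.card F : ℂ) ^ 3 := by
  classical
  simp only [curveSum, sq, pointExpSum_mul]
  rw [sum_pointExpSum hψ, card_monomialCurve_add_eq_zero h2 hp, Nat.cast_one, mul_one]

lemma sum_curveSum_mul_conj (hψ : ψ.IsPrimitive) (h2 : (2 : F) ≠ 0) (hp : Odd p) :
    ∑ t, curveSum ψ p t * starRingEnd ℂ (curveSum ψ p t)
      = (Fintype.card F : ℂ) ^ 3 * (2 * Fintype.card F - 1) := by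
  classical
  simp only [curveSum, sum_pointExpSum_mul_conj hψ]
  congr 1
  exact_mod_cast congrArg (Int.cast : ℤ → ℂ) (card_monomialCurve_eq h2 hp)

lemma sum_curveSum_sq_mul_conj_sq (hψ : ψ.IsPrimitive) (h2 : (2 : F) ≠ 0) :
    ∑ t, curveSum ψ 3 t ^ 2 * starRingEnd ℂ (curveSum ψ 3 t) ^ 2
      = (Fintype.card F : ℂ) ^ 3 * (8 * Fintype.card F ^ 2 - 16 * Fintype.card F + 9) := by
  classical
  simp only [curveSum, ← map_pow, pow_two (pointExpSum _ _ _), pointExpSum_mul,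
    sum_pointExpSum_mul_conj hψ]
  congr 1
  exact_mod_cast congrArg (Int.cast : ℤ → ℂ) (card_monomialCurve_three_add_eq_add h2)

lemma sum_curveSum_cube_mul_conj [CharP F 3] (hψ : ψ.IsPrimitive) :
    ∑ t, curveSum ψ 3 t ^ 3 * starRingEnd ℂ (curveSum ψ 3 t)
      = (Fintype.card F : ℂ) ^ 3 * (10 * Fintype.card F - 9) := by
  classical
  simp only [curveSum, pow_three', pointExpSum_mul, sum_pointExpSum_mul_conj hψ]
  congr 1
  exact_mod_cast congrArg (Int.cast : ℤ → ℂ) (card_monomialCurve_three_add_add_eq (F := F))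

end Moments

section TraceChar

variable {p : ℕ} [Fact p.Prime] {F : Type*} [Field F] [Algebra (ZMod p) F]

variable (p F) in
/-- The canonical additive character `x ↦ exp (2 π i Tr x / p)` of an extension `F` of `ZMod p`. -/
noncomputable def traceChar : AddChar F ℂ :=
  ZMod.stdAddChar.compAddMonoidHom (Algebra.trace (ZMod p) F).toAddMonoidHom

lemma traceChar_apply (x : F) : traceChar p F x = ZMod.stdAddChar (Algebra.trace (ZMod p) F x) :=
  rfl

lemma isPrimitive_traceChar [Finite F] : (traceChar p F).IsPrimitive := by
  obtain ⟨x, hx⟩ := Algebra.trace_surjective (ZMod p) F 1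
  refine .of_ne_one (AddChar.ne_one_iff.2 ⟨x, ?_⟩)
  rw [traceChar_apply, hx, ← AddChar.map_zero_eq_one (ZMod.stdAddChar (N := p))]
  exact ZMod.injective_stdAddChar.ne one_ne_zero

variable [Fintype F]

lemma curveSum_eq_sum_traceQuadraticForm (t : F × F × F) :
    curveSum (traceChar p F) p t = ∑ x, ZMod.stdAddChar (traceQuadraticForm (ZMod p) t x) := by
  simp only [curveSum, pointExpSum, monomialCurve, traceChar_apply, traceQuadraticForm_apply,
    ZMod.card]

lemma exists_curveSum_sq_eq (hp : p % 4 = 3) (hF : Even (Module.finrank (ZMod p) F))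
    {t : F × F × F} (ht : t ≠ 0) :
    ∃ d ≤ 4, curveSum (traceChar p F) p t ^ 2
      = (-1) ^ d * (p : ℂ) ^ (Module.finrank (ZMod p) F + d) := by
  have hK : ringChar (ZMod p) ≠ 2 := by
    rw [ZMod.ringChar_zmod_n]
    omega
  have hχ : quadraticChar (ZMod p) (-1) = -1 := by
    rw [quadraticChar_neg_one hK, ZMod.card, ZMod.χ₄_nat_three_mod_four hp]
  have hrank := (traceQuadraticForm (ZMod p) t).radical.finrank_quotient_add_finrank
  refine ⟨_, finrank_radical_traceQuadraticForm_le hK ht, ?_⟩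
  rw [curveSum_eq_sum_traceQuadraticForm,
    sum_addChar_quadraticForm_sq hK (ZMod.isPrimitive_stdAddChar p), hχ, ZMod.card,
    Int.cast_neg, Int.cast_one]
  congr 1
  exact neg_one_pow_congr (Nat.even_add.1 (hrank ▸ hF))

end TraceChar

section ValueDistribution

lemma mul_conj_eq_of_sq_eq {S : ℂ} {p d n : ℕ} (hS : S ^ 2 = (-1) ^ d * (p : ℂ) ^ n) :
    S * starRingEnd ℂ S = (p : ℂ) ^ n := by
  have hnorm : ‖S‖ ^ 2 = (p : ℝ) ^ n := by simpa using congrArg norm hS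
  rw [mul_conj', ← ofReal_pow, hnorm, ofReal_pow, ofReal_natCast]

lemma sq_eq_pow_iff_of_sq_eq {S : ℂ} {p m d j : ℕ} (hp : 1 < p)
    (hS : S ^ 2 = (-1) ^ d * (p : ℂ) ^ (m + d)) (hj : Even j) :
    S ^ 2 = (p : ℂ) ^ (m + j) ↔ d = j := by
  constructor
  · intro h
    have hpow : (p : ℂ) ^ (m + d) = (p : ℂ) ^ (m + j) := by
      rw [← mul_conj_eq_of_sq_eq hS, mul_conj_eq_of_sq_eq (d := 0) (by rw [h, pow_zero, one_mul])]
    exact Nat.add_left_cancel (Nat.pow_right_injective hp (by exact_mod_cast hpow))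
  · rintro rfl
    rw [hS, hj.neg_one_pow, one_mul]

lemma sq_add_mul_conj_mul_pow {S : ℂ} {p m d : ℕ} (hp : 1 < p) (hd : d ≤ 4)
    (hS : S ^ 2 = (-1) ^ d * (p : ℂ) ^ (m + d)) (k : ℕ) :
    (S ^ 2 + S * starRingEnd ℂ S) * (S * starRingEnd ℂ S) ^ k
      = 2 * ∑ j ∈ {0, 2, 4},
          if S ^ 2 = (p : ℂ) ^ (m + j) then ((p : ℂ) ^ (m + j)) ^ (k + 1) else 0 := by
  have hmem : d ∈ ({0, 2, 4} : Finset ℕ) ↔ Even d := by interval_cases d <;> decide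
  have hsum : (∑ j ∈ {0, 2, 4}, if S ^ 2 = (p : ℂ) ^ (m + j) then ((p : ℂ) ^ (m + j)) ^ (k + 1)
      else 0) = if Even d then ((p : ℂ) ^ (m + d)) ^ (k + 1) else 0 := by
    rw [← if_congr hmem rfl rfl, ← sum_ite_eq _ d fun j => ((p : ℂ) ^ (m + j)) ^ (k + 1)]
    refine sum_congr rfl fun j hj => if_congr (sq_eq_pow_iff_of_sq_eq hp hS ?_) rfl rfl
    revert j
    decide
  rw [hsum, mul_conj_eq_of_sq_eq hS, hS]
  split_ifs with heven
  · rw [heven.neg_one_pow]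
    ring
  · rw [(Nat.not_even_iff_odd.1 heven).neg_one_pow]
    ring

end ValueDistribution

section GaloisField

variable {p m : ℕ} [Fact p.Prime]

lemma zetaPow_eq_stdAddChar (a : ZMod p) : zetaPow p a = ZMod.stdAddChar a := by
  simpa [zetaPow] using (ZMod.stdAddChar_coe (N := p) a.val).symm

omit [Fact p.Prime] in
lemma nval_sq {ε : ℤ} (hε : ε ^ 2 = 1) {j : ℕ} (hj : Even j) :
    nval p m ε j ^ 2 = (p : ℂ) ^ (m + j) := by
  rw [nval, if_pos (Nat.even_iff.1 hj), mul_pow, ← Int.cast_pow, hε, ← ofReal_pow,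
    Real.sq_sqrt (by positivity)]
  push_cast
  ring

variable [Fintype (GaloisField p m)]

lemma card_galoisField (hm0 : m ≠ 0) : Fintype.card (GaloisField p m) = p ^ m := by
  rw [← Nat.card_eq_fintype_card, GaloisField.card p m hm0]

lemma expSum_eq_curveSum (t : GaloisField p m × GaloisField p m × GaloisField p m) :
    expSum p m t.1 t.2.1 t.2.2 = curveSum (traceChar p (GaloisField p m)) p t := by
  simp only [expSum, curveSum, pointExpSum, monomialCurve, traceChar_apply, zetaPow_eq_stdAddChar]
  congr!

open Classical in
lemma nn_one_add_nn_neg_one {j : ℕ} (hj : Even j) :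
    nn p m 1 j + nn p m (-1) j
      = #{t : GaloisField p m × GaloisField p m × GaloisField p m | t ≠ 0 ∧
          curveSum (traceChar p _) p t ^ 2 = (p : ℂ) ^ (m + j)} := by
  have hneg : nval p m (-1) j = -nval p m 1 j := by simp [nval, Nat.even_iff.1 hj]
  have hne : nval p m 1 j ≠ 0 := by
    rw [← pow_ne_zero_iff two_ne_zero, nval_sq (one_pow 2) hj]
    exact pow_ne_zero _ (Nat.cast_ne_zero.2 (Fact.out : p.Prime).ne_zero)
  rw [nn, nn, ← Set.ncard_union_eq, ← Set.ncard_coe_finset, coe_filter_univ]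
  · congr 1
    ext t
    simp only [Set.mem_union, Set.mem_ofPred_eq, ← and_or_left, hneg, ← sq_eq_sq_iff_eq_or_eq_neg,
      nval_sq (one_pow 2) hj, expSum_eq_curveSum]
    rfl
  · exact Set.disjoint_left.2 fun t ht ht' =>
      hne (self_eq_neg.1 ((ht.2.symm.trans ht'.2).trans hneg))

local notation "E" => curveSum (traceChar p (GaloisField p m)) p

open Classical in
lemma sum_curveSum_sq_add_mul_conj_mul_pow (hp : p % 4 = 3) (hm : Even m) (hm0 : m ≠ 0) (k : ℕ) :
    ∑ t, (E t ^ 2 + E t * starRingEnd ℂ (E t)) * (E t * starRingEnd ℂ (E t)) ^ k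
      = 2 * (((p : ℂ) ^ m) ^ 2) ^ (k + 1)
        + 2 * ∑ j ∈ {0, 2, 4},
          (nn p m 1 j + nn p m (-1) j : ℂ) * ((p : ℂ) ^ (m + j)) ^ (k + 1) := by
  have hfinrank : Module.finrank (ZMod p) (GaloisField p m) = m := GaloisField.finrank p hm0
  have hzero : E 0 = (p : ℂ) ^ m := by
    rw [curveSum, pointExpSum_zero, card_galoisField hm0, Nat.cast_pow]
  have hcount {j : ℕ} (hj : j ∈ ({0, 2, 4} : Finset ℕ)) :
      (nn p m 1 j + nn p m (-1) j : ℂ)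
        = ∑ t ∈ univ.erase 0, if E t ^ 2 = (p : ℂ) ^ (m + j) then 1 else 0 := by
    rw [sum_boole, ← Nat.cast_add, nn_one_add_nn_neg_one (by revert j; decide), ← filter_ne',
      filter_filter]
  have hterm (t) (ht : t ≠ 0) :
      (E t ^ 2 + E t * starRingEnd ℂ (E t)) * (E t * starRingEnd ℂ (E t)) ^ k
        = 2 * ∑ j ∈ {0, 2, 4},
            if E t ^ 2 = (p : ℂ) ^ (m + j) then ((p : ℂ) ^ (m + j)) ^ (k + 1) else 0 := by
    obtain ⟨d, hd, hE⟩ := exists_curveSum_sq_eq hp (hfinrank.symm ▸ hm) ht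
    rw [hfinrank] at hE
    exact sq_add_mul_conj_mul_pow (Fact.out : p.Prime).one_lt hd hE k
  rw [← add_sum_erase _ _ (mem_univ 0), sum_congr rfl fun t ht => hterm t (ne_of_mem_erase ht),
    ← mul_sum, sum_comm, hzero]
  congr 1
  · simp only [map_pow, conj_natCast]
    ring
  · refine congrArg (2 * ·) (sum_congr rfl fun j hj => ?_)
    simp only [hcount hj, sum_mul, ite_mul, one_mul, zero_mul]

end GaloisField

section NNMoments

lemma sum_zero_two_four {M : Type*} [AddCommMonoid M] (f : ℕ → M) :
    ∑ j ∈ {0, 2, 4}, f j = f 0 + f 2 + f 4 := by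
  simp [add_assoc]

lemma nn_second_moment {p m : ℕ} [Fact p.Prime] (hp : p % 4 = 3) (hm : Even m) (hm0 : m ≠ 0) :
    (nn p m 1 0 : ℝ) + nn p m (-1) 0 + p ^ 2 * (nn p m 1 2 + nn p m (-1) 2)
      + p ^ 4 * (nn p m 1 4 + nn p m (-1) 4) = (p ^ m) ^ 3 - p ^ m := by
  classical
  let : Fintype (GaloisField p m) := Fintype.ofFinite _
  have hψ := isPrimitive_traceChar (p := p) (F := GaloisField p m)
  have h2 : (2 : GaloisField p m) ≠ 0 := by
    refine Ring.two_ne_zero ?_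
    rw [ringChar.eq (GaloisField p m) p]
    omega
  have hodd : Odd p := Nat.odd_iff.2 (Nat.odd_of_mod_four_eq_three hp)
  have hq : (p : ℂ) ^ m ≠ 0 := pow_ne_zero _ (Nat.cast_ne_zero.2 (Fact.out : p.Prime).ne_zero)
  have hmoment := sum_curveSum_sq_add_mul_conj_mul_pow hp hm hm0 0
  simp only [pow_zero, mul_one, zero_add, pow_one, sum_add_distrib, sum_curveSum_sq hψ h2 hp,
    sum_curveSum_mul_conj hψ h2 hodd, card_galoisField hm0, sum_zero_two_four] at hmoment
  refine ofReal_injective (mul_left_cancel₀ (mul_ne_zero two_ne_zero hq) ?_)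
  push_cast at hmoment ⊢
  linear_combination -hmoment

lemma nn_fourth_moment {m : ℕ} [Fact (Nat.Prime 3)] (hm : Even m) (hm0 : m ≠ 0) :
    (nn 3 m 1 0 : ℝ) + nn 3 m (-1) 0 + 3 ^ 4 * (nn 3 m 1 2 + nn 3 m (-1) 2)
      + 3 ^ 8 * (nn 3 m 1 4 + nn 3 m (-1) 4) = 4 * (3 ^ m) ^ 2 * (3 ^ m - 1) := by
  classical
  let : Fintype (GaloisField 3 m) := Fintype.ofFinite _
  have hψ := isPrimitive_traceChar (p := 3) (F := GaloisField 3 m)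
  have hexpand (z w : ℂ) : (z ^ 2 + z * w) * (z * w) = z ^ 3 * w + z ^ 2 * w ^ 2 := by ring
  have hq : (3 : ℂ) ^ m ≠ 0 := pow_ne_zero _ three_ne_zero
  have hmoment := sum_curveSum_sq_add_mul_conj_mul_pow (p := 3) rfl hm hm0 1
  simp only [pow_one, hexpand, sum_add_distrib, sum_curveSum_cube_mul_conj hψ,
    sum_curveSum_sq_mul_conj_sq hψ two_ne_zero_of_charP_three, card_galoisField hm0,
    sum_zero_two_four] at hmoment
  refine ofReal_injective (mul_left_cancel₀ (mul_ne_zero two_ne_zero (pow_ne_zero 2 hq)) ?_)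
  push_cast at hmoment ⊢
  linear_combination -hmoment

end NNMoments

theorem macwilliams_identities_general (m : ℕ) (hme : Even m) (hm2 : 2 ≤ m) :
    letI : Fact (Nat.Prime 3) := ⟨by norm_num⟩
    let p : ℝ := 3
    let A2 : ℝ := p ^ m - 1
    let A4 : ℝ := (p ^ m - 1) * (2 * p ^ m - p - 3) / 3 + (p ^ m - 1) * (p ^ m - 3) / 2
    let a : ℝ := (p ^ (3 * m - 2) * ((p ^ m - 1) * (p ^ m - 2) * (p - 1) ^ 2 + 2 * A2)
        - p ^ (2 * (m - 1)) * (p - 1) ^ 2 * (p ^ (3 * m) - 2 * p ^ (2 * m) + 1)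
        + (p - 1) * (p ^ m - 1) * p ^ (3 * m - 1)) / ((p - 1) ^ 2 * p ^ (m - 2))
    let b : ℝ := (p ^ (3 * m - 4) *
          ((p ^ m - 1) * (p ^ m - 2) * (p ^ m - 3) * (p ^ m - 4) * (p - 1) ^ 4
            + 12 * A2 * (p ^ m - 3) * (p ^ m - 4) * (p - 1) ^ 2 + 24 * A4)
        - (p - 1) ^ 5 * p ^ (3 * (m - 1)) * a
        - p ^ (4 * (m - 1)) * (p - 1) ^ 4 *
            (p ^ (3 * m) - 4 * p ^ (2 * m) - 16 * p ^ m + 19)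
        + 6 * ((p - 1) ^ 3 * p ^ (2 * (m - 1)) * a
            + p ^ (3 * (m - 1)) * (p - 1) ^ 3 *
                (p ^ (3 * m) - p ^ (2 * m + 1) - 4 * p ^ m + 6))
        - 11 * ((p - 1) ^ 2 * p ^ (m - 2) * a
            + p ^ (2 * (m - 1)) * (p - 1) ^ 2 * (p ^ (3 * m) - 2 * p ^ (2 * m) + 1))
        + 6 * ((p - 1) * (p ^ m - 1) * p ^ (3 * m - 1))) / ((p - 1) ^ 4 * p ^ (2 * m - 4))
    ((nn 3 m 1 0 : ℝ) + nn 3 m (-1) 0 + p ^ 2 * ((nn 3 m 1 2 : ℝ) + nn 3 m (-1) 2)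
        + p ^ 4 * ((nn 3 m 1 4 : ℝ) + nn 3 m (-1) 4) = a) ∧
    ((nn 3 m 1 0 : ℝ) + nn 3 m (-1) 0 + p ^ 4 * ((nn 3 m 1 2 : ℝ) + nn 3 m (-1) 2)
        + p ^ 8 * ((nn 3 m 1 4 : ℝ) + nn 3 m (-1) 4) = b) := by
  intro p A2 A4 a b
  have : Fact (Nat.Prime 3) := ⟨by norm_num⟩
  have hsecond := nn_second_moment (p := 3) rfl hme (by omega)
  rw [Nat.cast_ofNat] at hsecond
  have hfourth := nn_fourth_moment hme (by omega)
  obtain ⟨n, rfl⟩ : ∃ n, m = n + 2 := ⟨m - 2, by omega⟩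
  have hp : p = 3 := rfl
  have ha : a = (3 ^ (n + 2)) ^ 3 - 3 ^ (n + 2) := by
    have h₁ : 3 * (n + 2) - 2 = 3 * n + 4 := by omega
    have h₂ : 3 * (n + 2) - 1 = 3 * n + 5 := by omega
    simp only [a, A2, hp, h₁, h₂, Nat.add_sub_cancel, Nat.add_succ_sub_one]
    rw [div_eq_iff (by positivity)]
    ring
  have hb : b = 4 * (3 ^ (n + 2)) ^ 2 * (3 ^ (n + 2) - 1) := by
    have h₁ : 3 * (n + 2) - 1 = 3 * n + 5 := by omega
    have h₂ : 3 * (n + 2) - 4 = 3 * n + 2 := by omega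
    have h₃ : 2 * (n + 2) - 4 = 2 * n := by omega
    simp only [b, A2, A4, ha, hp, h₁, h₂, h₃, Nat.add_sub_cancel, Nat.add_succ_sub_one]
    rw [div_eq_iff (by positivity)]
    ring
  rw [ha, hb]
  exact ⟨hsecond, hfourth⟩

theorem macwilliams_identities (m : ℕ) (hme : Even m) (hm6 : 6 ≤ m) :
    letI : Fact (Nat.Prime 3) := ⟨by norm_num⟩
    let p : ℝ := 3
    let A2 : ℝ := p ^ m - 1
    let A4 : ℝ := (p ^ m - 1) * (2 * p ^ m - p - 3) / 3 + (p ^ m - 1) * (p ^ m - 3) / 2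
    let a : ℝ := (p ^ (3 * m - 2) * ((p ^ m - 1) * (p ^ m - 2) * (p - 1) ^ 2 + 2 * A2)
        - p ^ (2 * (m - 1)) * (p - 1) ^ 2 * (p ^ (3 * m) - 2 * p ^ (2 * m) + 1)
        + (p - 1) * (p ^ m - 1) * p ^ (3 * m - 1)) / ((p - 1) ^ 2 * p ^ (m - 2))
    let b : ℝ := (p ^ (3 * m - 4) *
          ((p ^ m - 1) * (p ^ m - 2) * (p ^ m - 3) * (p ^ m - 4) * (p - 1) ^ 4
            + 12 * A2 * (p ^ m - 3) * (p ^ m - 4) * (p - 1) ^ 2 + 24 * A4)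
        - (p - 1) ^ 5 * p ^ (3 * (m - 1)) * a
        - p ^ (4 * (m - 1)) * (p - 1) ^ 4 *
            (p ^ (3 * m) - 4 * p ^ (2 * m) - 16 * p ^ m + 19)
        + 6 * ((p - 1) ^ 3 * p ^ (2 * (m - 1)) * a
            + p ^ (3 * (m - 1)) * (p - 1) ^ 3 *
                (p ^ (3 * m) - p ^ (2 * m + 1) - 4 * p ^ m + 6))
        - 11 * ((p - 1) ^ 2 * p ^ (m - 2) * a
            + p ^ (2 * (m - 1)) * (p - 1) ^ 2 * (p ^ (3 * m) - 2 * p ^ (2 * m) + 1))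
        + 6 * ((p - 1) * (p ^ m - 1) * p ^ (3 * m - 1))) / ((p - 1) ^ 4 * p ^ (2 * m - 4))
    ((nn 3 m 1 0 : ℝ) + nn 3 m (-1) 0 + p ^ 2 * ((nn 3 m 1 2 : ℝ) + nn 3 m (-1) 2)
        + p ^ 4 * ((nn 3 m 1 4 : ℝ) + nn 3 m (-1) 4) = a) ∧
    ((nn 3 m 1 0 : ℝ) + nn 3 m (-1) 0 + p ^ 4 * ((nn 3 m 1 2 : ℝ) + nn 3 m (-1) 2)
        + p ^ 8 * ((nn 3 m 1 4 : ℝ) + nn 3 m (-1) 4) = b) := by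
  exact macwilliams_identities_general m hme (by omega)
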